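/- A propositional normal logic program P has a total well-founded model if and only if there exist a total model I of P and a total level mapping l for P such that P satisfies (WF) with respect to I and l. -/

import Mathlib

namespace LP

/-- A literal over a set of propositional atoms: an atom or a negated atom. -/
inductive Lit (atom : Type) where
  | pos : atom → Lit atom
  | neg : atom → Lit atom

/-- The underlying atom of a literal. -/
def Lit.atomOf {atom : Type} : Lit atom → atom
  | .pos a => a
  | .neg a => a

/-- A clause `head ← pos₁,…,posₙ, ¬neg₁,…,¬negₘ`. -/
structure Clause (atom : Type) where
  head : atom
  pos : Finset atom
  neg : Finset atom

variable {atom : Type}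

/-- A (propositional) normal logic program: a set of clauses. -/
abbrev Program (atom : Type) := Set (Clause atom)

/-- Partial interpretations: sets of literals. -/
abbrev Interp (atom : Type) := Set (Lit atom)

def Consistent (I : Interp atom) : Prop := ∀ a : atom, ¬ (Lit.pos a ∈ I ∧ Lit.neg a ∈ I)

def Total (I : Interp atom) : Prop := ∀ a : atom, Lit.pos a ∈ I ∨ Lit.neg a ∈ I

/-- An atom is defined (true or false, i.e. not undefined) in `I`. -/
def Defined (I : Interp atom) (A : atom) : Prop := Lit.pos A ∈ I ∨ Lit.neg A ∈ I

/-- Every body literal of the clause is true in `I`. -/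
def BodyTrue (I : Interp atom) (C : Clause atom) : Prop :=
  (∀ a ∈ C.pos, Lit.pos a ∈ I) ∧ (∀ b ∈ C.neg, Lit.neg b ∈ I)

/-- Some body literal of the clause is false in `I`. -/
def BodyFalse (I : Interp atom) (C : Clause atom) : Prop :=
  (∃ a ∈ C.pos, Lit.neg a ∈ I) ∨ (∃ b ∈ C.neg, Lit.pos b ∈ I)

/-- Three-valued model. -/
def Model3 (P : Program atom) (I : Interp atom) : Prop :=
  Consistent I ∧ ∀ C ∈ P,
    (BodyTrue I C → Lit.pos C.head ∈ I) ∧ (¬ BodyFalse I C → Lit.neg C.head ∉ I)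

/-- Two-valued model. -/
def Model2 (P : Program atom) (M : Set atom) : Prop :=
  ∀ C ∈ P, (∀ a ∈ C.pos, a ∈ M) → (∀ b ∈ C.neg, b ∉ M) → C.head ∈ M

/-- A program is definite if no clause has negative body literals. -/
def Definite (P : Program atom) : Prop := ∀ C ∈ P, C.neg = ∅

/-- The one-step operator `T_P⁺` for definite programs. -/
def Tplus (P : Program atom) (M : Set atom) : Set atom :=
  {A | ∃ C ∈ P, C.head = A ∧ C.neg = ∅ ∧ ∀ a ∈ C.pos, a ∈ M}

def TplusIter (P : Program atom) : ℕ → Set atom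
  | 0 => ∅
  | n + 1 => Tplus P (TplusIter P n)

/-- `T_P⁺ ↑ ω`, the least two-valued model of a definite program. -/
def TplusOmega (P : Program atom) : Set atom := ⋃ n, TplusIter P n

/-- The Gelfond–Lifschitz reduct `P/M`. -/
def GLreduct (P : Program atom) (M : Set atom) : Program atom :=
  {C' | ∃ C ∈ P, (∀ b ∈ C.neg, b ∉ M) ∧ C' = ⟨C.head, C.pos, ∅⟩}

/-- The Gelfond–Lifschitz operator. -/
def GLop (P : Program atom) (M : Set atom) : Set atom := TplusOmega (GLreduct P M)

/-- Stable model. -/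
def Stable (P : Program atom) (M : Set atom) : Prop := GLop P M = M

def posLits (S : Set atom) : Interp atom := Lit.pos '' S
def negLits (S : Set atom) : Interp atom := Lit.neg '' S

/-- Three-valued immediate-consequence operator `T_P`. -/
def TP (P : Program atom) (I : Interp atom) : Set atom :=
  {A | ∃ C ∈ P, C.head = A ∧ BodyTrue I C}

/-- `F_P`: atoms all of whose clauses have false bodies. -/
def FP (P : Program atom) (I : Interp atom) : Set atom :=
  {A | ∀ C ∈ P, C.head = A → BodyFalse I C}

/-- Fitting's operator `Φ_P`. -/
def Phi (P : Program atom) (I : Interp atom) : Interp atom :=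
  posLits (TP P I) ∪ negLits (FP P I)

/-- Knaster–Tarski least (pre-)fixed point of an operator on sets. -/
def lfpSet {L : Type*} (F : Set L → Set L) : Set L := ⋂₀ {I | F I ⊆ I}

/-- Knaster–Tarski greatest (post-)fixed point of an operator on sets. -/
def gfpSet {L : Type*} (F : Set L → Set L) : Set L := ⋃₀ {I | I ⊆ F I}

/-- The Fitting (Kripke–Kleene) model: least fixed point of `Φ_P`. -/
def FittingModel (P : Program atom) : Interp atom := lfpSet (Phi P)

/-- Transfinite iteration `F ↑ α` of an operator starting from `∅`. -/
noncomputable def iterOrd {L : Type*} (F : Set L → Set L) (α : Ordinal.{0}) : Set L :=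
  Ordinal.limitRecOn α ∅ (fun _ ih => F ih) (fun o _ ih => ⋃ β, ⋃ h : β < o, ih β h)

/-- `U` is an unfounded set of `P` with respect to `I`. -/
def Unfounded (P : Program atom) (I : Interp atom) (U : Set atom) : Prop :=
  ∀ A ∈ U, ∀ C ∈ P, C.head = A → BodyFalse I C ∨ ∃ a ∈ C.pos, a ∈ U

/-- The greatest unfounded set of `P` with respect to `I`. -/
def UP (P : Program atom) (I : Interp atom) : Set atom := ⋃₀ {U | Unfounded P I U}

/-- The van Gelder–Ross–Schlipf operator `W_P`. -/
def WP (P : Program atom) (I : Interp atom) : Interp atom :=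
  posLits (TP P I) ∪ negLits (UP P I)

/-- The well-founded model: least fixed point of `W_P`. -/
def WFModel (P : Program atom) : Interp atom := lfpSet (WP P)

/-- `P` satisfies (F) with respect to `I` and the level mapping `l`. -/
def CondF (P : Program atom) (I : Interp atom) (l : atom → Ordinal.{0}) : Prop :=
  ∀ A : atom, Defined I A →
    (Lit.pos A ∈ I ∧ ∃ C ∈ P, C.head = A ∧
        (∀ a ∈ C.pos, Lit.pos a ∈ I ∧ l a < l A) ∧
        (∀ b ∈ C.neg, Lit.neg b ∈ I ∧ l b < l A)) ∨
    (Lit.neg A ∈ I ∧ ∀ C ∈ P, C.head = A →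
        (∃ a ∈ C.pos, Lit.neg a ∈ I ∧ l a < l A) ∨
        (∃ b ∈ C.neg, Lit.pos b ∈ I ∧ l b < l A))

/-- `P` satisfies (WF) with respect to `I` and the level mapping `l`. -/
def CondWF (P : Program atom) (I : Interp atom) (l : atom → Ordinal.{0}) : Prop :=
  ∀ A : atom, Defined I A →
    (Lit.pos A ∈ I ∧ ∃ C ∈ P, C.head = A ∧
        (∀ a ∈ C.pos, Lit.pos a ∈ I ∧ l a < l A) ∧
        (∀ b ∈ C.neg, Lit.neg b ∈ I ∧ l b < l A)) ∨
    (Lit.neg A ∈ I ∧ ∀ C ∈ P, C.head = A →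
        (∃ a ∈ C.pos, Lit.neg a ∈ I ∧ l a ≤ l A) ∨
        (∃ b ∈ C.neg, Lit.pos b ∈ I ∧ l b < l A))

/-- `P` satisfies (WS) with respect to `I` and the level mapping `l`. -/
def CondWS (P : Program atom) (I : Interp atom) (l : atom → Ordinal.{0}) : Prop :=
  ∀ A : atom, Defined I A →
    (Lit.pos A ∈ I ∧ ∃ C ∈ P, C.head = A ∧
        (∀ a ∈ C.pos, Lit.pos a ∈ I ∧ l a < l A) ∧
        (∀ b ∈ C.neg, Lit.neg b ∈ I ∧ l b < l A)) ∨
    (Lit.neg A ∈ I ∧ ∀ C ∈ P, C.head = A →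
        (∃ a ∈ C.pos, Lit.neg a ∈ I ∧ l a < l A) ∨
        ((∀ a ∈ C.pos, l a ≤ l A) ∧ (∀ b ∈ C.neg, l b < l A) ∧
            ∃ a ∈ C.pos, Lit.neg a ∈ I) ∨
        (∃ b ∈ C.neg, Lit.pos b ∈ I ∧ l b < l A))

/-- `A` refers to `B`. -/
def RefersTo (P : Program atom) (A B : atom) : Prop :=
  ∃ C ∈ P, C.head = A ∧ (B ∈ C.pos ∨ B ∈ C.neg)

/-- `A` refers negatively to `B`. -/
def RefersNeg (P : Program atom) (A B : atom) : Prop :=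
  ∃ C ∈ P, C.head = A ∧ B ∈ C.neg

/-- `DepOn P A B`: `A` depends on `B`, i.e. `B ≤ A`. -/
def DepOn (P : Program atom) : atom → atom → Prop := Relation.TransGen (RefersTo P)

/-- `DepNeg P B A`: `B < A`, i.e. `A` depends negatively on `B`. -/
def DepNeg (P : Program atom) (B A : atom) : Prop :=
  ∃ C D, RefersNeg P C D ∧ (DepOn P A C ∨ C = A) ∧ (DepOn P D B ∨ B = D)

/-- `A ~ B`. -/
def Sim (P : Program atom) (A B : atom) : Prop :=
  A = B ∨ (DepNeg P A B ∧ DepNeg P B A)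

/-- The components of `P`: equivalence classes of `~`. -/
def IsComponent (P : Program atom) (C : Set atom) : Prop :=
  ∃ A : atom, C = {B | Sim P A B}

/-- A trivial component: a singleton `{A}` with `A ≮ A`. -/
def TrivialComponent (P : Program atom) (C : Set atom) : Prop :=
  ∃ A : atom, C = {A} ∧ ¬ DepNeg P A A

/-- The ordering `≺` on components. -/
def CompLt (P : Program atom) (C₁ C₂ : Set atom) : Prop :=
  C₁ ≠ C₂ ∧ ∀ A₁ ∈ C₁, ∃ A₂ ∈ C₂, DepNeg P A₁ A₂

def MinimalComponent (P : Program atom) (C : Set atom) : Prop :=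
  IsComponent P C ∧ ¬ ∃ C₂, IsComponent P C₂ ∧ CompLt P C₂ C

/-- The bottom stratum `S(P)`: union of all minimal components. -/
def bottomStratum (P : Program atom) : Set atom :=
  {A | ∃ C, MinimalComponent P C ∧ A ∈ C}

/-- The bottom layer `L(P)`: clauses with head in the bottom stratum. -/
def bottomLayer (P : Program atom) : Program atom :=
  {C ∈ P | C.head ∈ bottomStratum P}

/-- Delete from the body of `C` all literals true in `I`. -/
noncomputable def reduceClause (I : Interp atom) (C : Clause atom) : Clause atom :=
  letI : ∀ p : Prop, Decidable p := fun p => Classical.propDecidable p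
  ⟨C.head, C.pos.filter (fun a => Lit.pos a ∉ I), C.neg.filter (fun b => Lit.neg b ∉ I)⟩

/-- Steps (1) and (2) of the reduct of `P` with respect to `I`. -/
noncomputable def step12 (P : Program atom) (I : Interp atom) : Program atom :=
  {C' | ∃ C ∈ P, Lit.pos C.head ∉ I ∧ ¬ BodyFalse I C ∧ C' = reduceClause I C}

def IsUnitClause (C : Clause atom) : Prop := C.pos = ∅ ∧ C.neg = ∅

/-- The reduct `P/I` of Przymusinska–Przymusinski (steps (1)–(3)). -/
noncomputable def reduct (P : Program atom) (I : Interp atom) : Program atom :=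
  {C ∈ step12 P I | IsUnitClause C ∨ ¬ ∃ C' ∈ step12 P I, C'.head = C.head ∧ IsUnitClause C'}

/-- The atoms occurring in `P`. -/
def atomsOf (P : Program atom) : Set atom :=
  {A | ∃ C ∈ P, A = C.head ∨ A ∈ C.pos ∨ A ∈ C.neg}

/-- `R`: atoms undefined in `N` which are eliminated from `P` by reducing w.r.t. `N`. -/
noncomputable def Ratoms (P : Program atom) (N : Interp atom) : Set atom :=
  {A | A ∈ atomsOf P ∧ A ∉ atomsOf (reduct P N) ∧ ¬ Defined N A}

/-- The definite (partial) model of a definite program `Q`. -/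
def defPartialModel (Q : Program atom) : Interp atom :=
  posLits (TplusOmega Q) ∪ negLits (atomsOf Q \ TplusOmega Q)

/-- The stopping condition of the weakly perfect model construction at `N`. -/
noncomputable def stopCond (P : Program atom) (N : Interp atom) : Prop :=
  reduct P N = ∅ ∨ bottomStratum (reduct P N) = ∅ ∨
    ∃ C ∈ bottomLayer (reduct P N), C.neg ≠ ∅

/-- `M_α` computed from `N_α` (empty if the construction has stopped). -/
noncomputable def Mstep (P : Program atom) (N : Interp atom) : Interp atom :=
  letI : ∀ p : Prop, Decidable p := fun p => Classical.propDecidable p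
  if stopCond P N then ∅
  else defPartialModel (bottomLayer (reduct P N)) ∪ negLits (Ratoms P N)

/-- `N_α = ⋃_{0<δ<α} M_δ` of the weakly perfect model construction. -/
noncomputable def Nseq (P : Program atom) : Ordinal.{0} → Interp atom :=
  Ordinal.lt_wf.fix (C := fun _ => Interp atom)
    (fun α ih => ⋃ β : Ordinal.{0}, ⋃ h : β < α, Mstep P (ih β h))

/-- The stage at which the weakly perfect model construction stops. -/
noncomputable def wpStop (P : Program atom) : Ordinal.{0} :=
  sInf {α | stopCond P (Nseq P α)}

/-- The weakly perfect model `M_P = N_α ∪ ¬R_α` at the stopping stage `α`. -/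
noncomputable def weaklyPerfectModel (P : Program atom) : Interp atom :=
  Nseq P (wpStop P) ∪ negLits (Ratoms P (Nseq P (wpStop P)))

/-- Clause subsumption `C₁ ≼ C₂`. -/
def ClauseSub (C₁ C₂ : Clause atom) : Prop :=
  C₁.head = C₂.head ∧ C₁.pos ⊆ C₂.pos ∧ C₁.neg ⊆ C₂.neg

/-- `P'` subsumes `Q` model-consistently with respect to `I`: `P' ≼_I Q`. -/
def SubsumesMC (P' Q : Program atom) (I : Interp atom) : Prop :=
  (∀ C₁ ∈ P', ∃ C₂ ∈ Q, ClauseSub C₁ C₂ ∧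
      (∀ a ∈ C₂.pos, a ∉ C₁.pos → Lit.pos a ∈ I) ∧
      (∀ b ∈ C₂.neg, b ∉ C₁.neg → Lit.neg b ∈ I)) ∧
  (∀ C₂ ∈ Q, BodyTrue I C₂ → Lit.pos C₂.head ∉ I → ∃ C₁ ∈ P', ClauseSub C₁ C₂)

/-!
The stages of the iteration of `W_P` supply the level mapping: the level of an atom is the first
stage `γ` at which `W_P` decides it. A true atom is then derived from literals decided strictly
earlier, whereas a false atom may rest on other atoms of the greatest unfounded set of the same
stage; this is the difference between `<` and `≤` in (WF). Conversely, if (WF) holds for a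
consistent `I` and `l`, then transfinite induction on levels puts `I` inside every prefixed point
of `W_P`, because the false atoms of level at most `α` form an unfounded set once the true atoms
of level below `α` are known. Hence the well-founded model is the greatest model satisfying (WF)
for some level mapping.
-/

section Interpretations

variable {I J : Interp atom} {C : Clause atom}

theorem Total.mono (hI : Total I) (hIJ : I ⊆ J) : Total J :=
  fun A => (hI A).imp (@hIJ _) (@hIJ _)

theorem BodyTrue.mono (hC : BodyTrue I C) (hIJ : I ⊆ J) : BodyTrue J C :=
  ⟨fun a ha => hIJ (hC.1 a ha), fun b hb => hIJ (hC.2 b hb)⟩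

theorem BodyFalse.mono (hC : BodyFalse I C) (hIJ : I ⊆ J) : BodyFalse J C :=
  hC.imp (fun ⟨a, ha, haI⟩ => ⟨a, ha, hIJ haI⟩) (fun ⟨b, hb, hbI⟩ => ⟨b, hb, hIJ hbI⟩)

theorem BodyTrue.not_bodyFalse (hC : BodyTrue I C) (hI : Consistent I) : ¬ BodyFalse I C := by
  rintro (⟨a, ha, haI⟩ | ⟨b, hb, hbI⟩)
  · exact hI a ⟨hC.1 a ha, haI⟩
  · exact hI b ⟨hbI, hC.2 b hb⟩

end Interpretations

section Operator

variable {P : Program atom} {I J : Interp atom} {U : Set atom} {A : atom}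

theorem Unfounded.mono (hU : Unfounded P I U) (hIJ : I ⊆ J) : Unfounded P J U :=
  fun A hA C hC hCA => (hU A hA C hC hCA).imp_left (·.mono hIJ)

theorem unfounded_UP (P : Program atom) (I : Interp atom) : Unfounded P I (UP P I) := by
  rintro A ⟨U, hU, hA⟩ C hC hCA
  exact (hU A hA C hC hCA).imp_right fun ⟨a, ha, haU⟩ => ⟨a, ha, U, hU, haU⟩

theorem pos_mem_WP : Lit.pos A ∈ WP P I ↔ A ∈ TP P I := by
  simp [WP, posLits, negLits]

theorem neg_mem_WP : Lit.neg A ∈ WP P I ↔ A ∈ UP P I := by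
  simp [WP, posLits, negLits]

theorem monotone_WP (P : Program atom) : Monotone (WP P) := by
  rintro I J hIJ (A | A) hA
  · obtain ⟨C, hC, hCA, hbody⟩ := pos_mem_WP.1 hA
    exact pos_mem_WP.2 ⟨C, hC, hCA, hbody.mono hIJ⟩
  · obtain ⟨U, hU, hAU⟩ := neg_mem_WP.1 hA
    exact neg_mem_WP.2 ⟨U, hU.mono hIJ, hAU⟩

end Operator

namespace CondWF

variable {P : Program atom} {I J : Interp atom} {l : atom → Ordinal.{0}} {A : atom}

theorem exists_clause (hl : CondWF P I l) (hI : Consistent I) (hA : Lit.pos A ∈ I) :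
    ∃ C ∈ P, C.head = A ∧ (∀ a ∈ C.pos, Lit.pos a ∈ I ∧ l a < l A) ∧
      ∀ b ∈ C.neg, Lit.neg b ∈ I ∧ l b < l A :=
  (hl A (.inl hA)).elim And.right fun h => (hI A ⟨hA, h.1⟩).elim

theorem exists_false_literal (hl : CondWF P I l) (hI : Consistent I) {C : Clause atom}
    (hC : C ∈ P) (hA : Lit.neg C.head ∈ I) :
    (∃ a ∈ C.pos, Lit.neg a ∈ I ∧ l a ≤ l C.head) ∨
      ∃ b ∈ C.neg, Lit.pos b ∈ I ∧ l b < l C.head :=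
  (hl C.head (.inr hA)).elim (fun h => (hI C.head ⟨h.1, hA⟩).elim) fun h => h.2 C hC rfl

theorem notMem_UP (hl : CondWF P I l) (hI : Consistent I) (hA : Lit.pos A ∈ I) :
    A ∉ UP P I := by
  induction hα : l A using WellFoundedLT.induction generalizing A with
  | ind α ih =>
    subst hα
    intro hAU
    obtain ⟨C, hC, hCA, hpos, hneg⟩ := hl.exists_clause hI hA
    have hbody : BodyTrue I C := ⟨fun a ha => (hpos a ha).1, fun b hb => (hneg b hb).1⟩
    rcases unfounded_UP P I A hAU C hC hCA with hfalse | ⟨a, ha, haU⟩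
    · exact hbody.not_bodyFalse hI hfalse
    · exact ih _ (hpos a ha).2 (hpos a ha).1 rfl haU

theorem consistent_WP (hl : CondWF P I l) (hI : Consistent I) : Consistent (WP P I) := by
  rintro A ⟨hpos, hneg⟩
  obtain ⟨C, hC, hCA, hbody⟩ := pos_mem_WP.1 hpos
  rcases unfounded_UP P I A (neg_mem_WP.1 hneg) C hC hCA with hfalse | ⟨a, ha, haU⟩
  · exact hbody.not_bodyFalse hI hfalse
  · exact hl.notMem_UP hI (hbody.1 a ha) haU

theorem model3 (hl : CondWF P I l) (hI : Consistent I) (hWP : WP P I ⊆ I) : Model3 P I := by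
  refine ⟨hI, fun C hC => ⟨fun hbody => hWP (pos_mem_WP.2 ⟨C, hC, rfl, hbody⟩), ?_⟩⟩
  intro hbody hneg
  refine hbody ((hl.exists_false_literal hI hC hneg).imp ?_ ?_)
  · exact fun ⟨a, ha, haI, _⟩ => ⟨a, ha, haI⟩
  · exact fun ⟨b, hb, hbI, _⟩ => ⟨b, hb, hbI⟩

theorem unfounded_setOf_neg_mem_and_le (hl : CondWF P I l) (hI : Consistent I)
    {α : Ordinal.{0}} (hJ : ∀ B, Lit.pos B ∈ I → l B < α → Lit.pos B ∈ J) :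
    Unfounded P J {B | Lit.neg B ∈ I ∧ l B ≤ α} := by
  rintro _ ⟨hB, hBα⟩ C hC rfl
  rcases hl.exists_false_literal hI hC hB with ⟨a, ha, haI, hle⟩ | ⟨b, hb, hbI, hlt⟩
  · exact .inr ⟨a, ha, haI, hle.trans hBα⟩
  · exact .inl (.inr ⟨b, hb, hJ b hbI (hlt.trans_le hBα)⟩)

theorem subset_of_WP_subset (hl : CondWF P I l) (hI : Consistent I) (hJ : WP P J ⊆ J) :
    I ⊆ J := by
  intro x hx
  induction hα : l x.atomOf using WellFoundedLT.induction generalizing x with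
  | ind α ih =>
    subst hα
    cases x with
    | pos A =>
      obtain ⟨C, hC, hCA, hpos, hneg⟩ := hl.exists_clause hI hx
      exact hJ (pos_mem_WP.2 ⟨C, hC, hCA, fun a ha => ih _ (hpos a ha).2 (hpos a ha).1 rfl,
        fun b hb => ih _ (hneg b hb).2 (hneg b hb).1 rfl⟩)
    | neg A =>
      have hU : Unfounded P J {B | Lit.neg B ∈ I ∧ l B ≤ l A} :=
        hl.unfounded_setOf_neg_mem_and_le hI fun B hB hBA => ih _ hBA hB rfl
      exact hJ (neg_mem_WP.2 ⟨_, hU, hx, le_rfl⟩)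

theorem subset_WFModel (hl : CondWF P I l) (hI : Consistent I) : I ⊆ WFModel P :=
  Set.subset_sInter fun _ hJ => hl.subset_of_WP_subset hI hJ

end CondWF

section Stages

/-- The operator `W_P` bundled as a monotone map, so that Mathlib's fixed-point theory applies. -/
def WPHom (P : Program atom) : Interp atom →o Interp atom := ⟨WP P, monotone_WP P⟩

/-- The stage `W_P ↑ γ` of the transfinite iteration of `W_P` from the empty interpretation, with
`W_P ↑ (γ + 1) = W_P (W_P ↑ γ)`. -/
noncomputable def wpStage (P : Program atom) (γ : Ordinal.{0}) : Interp atom :=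
  OrdinalApprox.lfpApprox (WPHom P) ⊥ γ

/-- The level mapping that sends `A` to the least `γ` such that `A` is decided in
`W_P ↑ (γ + 1)`; it takes the junk value `0` at atoms that are never decided. -/
noncomputable def wfLevel (P : Program atom) (A : atom) : Ordinal.{0} :=
  sInf {γ | Defined (WP P (wpStage P γ)) A}

variable {P : Program atom} {A : atom} {β γ : Ordinal.{0}}

theorem mem_wpStage_iff {x : Lit atom} : x ∈ wpStage P γ ↔ ∃ β < γ, x ∈ WP P (wpStage P β) := by
  rw [wpStage, OrdinalApprox.lfpApprox]
  simp [WPHom, wpStage]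

theorem monotone_wpStage (P : Program atom) : Monotone (wpStage P) :=
  OrdinalApprox.lfpApprox_mono_right (WPHom P)

theorem WP_wpStage_subset (hβγ : β < γ) : WP P (wpStage P β) ⊆ wpStage P γ :=
  OrdinalApprox.apply_lfpApprox_le_lfpApprox_of_lt (WPHom P) hβγ

theorem exists_wpStage_eq_WFModel (P : Program atom) : ∃ γ, wpStage P γ = WFModel P :=
  OrdinalApprox.lfp_mem_range_lfpApprox (WPHom P)

theorem WP_WFModel (P : Program atom) : WP P (WFModel P) = WFModel P :=
  (WPHom P).map_lfp

theorem defined_wpStage_iff :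
    Defined (wpStage P γ) A ↔ ∃ β < γ, Defined (WP P (wpStage P β)) A := by
  simp only [Defined, mem_wpStage_iff, and_or_left, exists_or]

theorem wfLevel_le (hA : Defined (WP P (wpStage P γ)) A) : wfLevel P A ≤ γ :=
  csInf_le' hA

theorem wfLevel_lt (hA : Defined (wpStage P γ) A) : wfLevel P A < γ :=
  let ⟨_, hβγ, hβ⟩ := defined_wpStage_iff.1 hA
  (wfLevel_le hβ).trans_lt hβγ

theorem defined_WP_wpStage_wfLevel (hA : Defined (wpStage P γ) A) :
    Defined (WP P (wpStage P (wfLevel P A))) A :=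
  let ⟨β, _, hβ⟩ := defined_wpStage_iff.1 hA
  csInf_mem (s := {γ | Defined (WP P (wpStage P γ)) A}) ⟨β, hβ⟩

theorem condWF_wpStage (P : Program atom) (γ : Ordinal.{0}) :
    CondWF P (wpStage P γ) (wfLevel P) := by
  intro A hA
  have hlt : wfLevel P A < γ := wfLevel_lt hA
  have hsub : wpStage P (wfLevel P A) ⊆ wpStage P γ := monotone_wpStage P hlt.le
  refine (defined_WP_wpStage_wfLevel hA).imp ?_ ?_ <;> intro hdec
  · refine ⟨WP_wpStage_subset hlt hdec, ?_⟩
    obtain ⟨C, hC, hCA, hpos, hneg⟩ := pos_mem_WP.1 hdec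
    exact ⟨C, hC, hCA, fun a ha => ⟨hsub (hpos a ha), wfLevel_lt (.inl (hpos a ha))⟩,
      fun b hb => ⟨hsub (hneg b hb), wfLevel_lt (.inr (hneg b hb))⟩⟩
  · refine ⟨WP_wpStage_subset hlt hdec, fun C hC hCA => ?_⟩
    rcases unfounded_UP P _ A (neg_mem_WP.1 hdec) C hC hCA with
      (⟨a, ha, hneg⟩ | ⟨b, hb, hpos⟩) | ⟨a, ha, haU⟩
    · exact .inl ⟨a, ha, hsub hneg, (wfLevel_lt (.inr hneg)).le⟩
    · exact .inr ⟨b, hb, hsub hpos, wfLevel_lt (.inl hpos)⟩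
    · have hneg : Lit.neg a ∈ WP P (wpStage P (wfLevel P A)) := neg_mem_WP.2 haU
      exact .inl ⟨a, ha, WP_wpStage_subset hlt hneg, wfLevel_le (.inr hneg)⟩

theorem consistent_wpStage (P : Program atom) (γ : Ordinal.{0}) : Consistent (wpStage P γ) := by
  induction γ using WellFoundedLT.induction with
  | ind γ ih =>
    rintro A ⟨hpos, hneg⟩
    obtain ⟨β, hβ, hpos⟩ := mem_wpStage_iff.1 hpos
    obtain ⟨δ, hδ, hneg⟩ := mem_wpStage_iff.1 hneg
    have hmono : Monotone fun ε => WP P (wpStage P ε) := (monotone_WP P).comp (monotone_wpStage P)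
    exact (condWF_wpStage P _).consistent_WP (ih _ (max_lt hβ hδ)) A
      ⟨hmono (le_max_left β δ) hpos, hmono (le_max_right β δ) hneg⟩

end Stages

theorem consistent_WFModel (P : Program atom) : Consistent (WFModel P) := by
  obtain ⟨γ, hγ⟩ := exists_wpStage_eq_WFModel P
  exact hγ ▸ consistent_wpStage P γ

theorem condWF_WFModel (P : Program atom) : CondWF P (WFModel P) (wfLevel P) := by
  obtain ⟨γ, hγ⟩ := exists_wpStage_eq_WFModel P
  exact hγ ▸ condWF_wpStage P γ

theorem isGreatest_WFModel (P : Program atom) :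
    IsGreatest {I | Model3 P I ∧ ∃ l, CondWF P I l} (WFModel P) := by
  have hl := condWF_WFModel P
  exact ⟨⟨hl.model3 (consistent_WFModel P) (WP_WFModel P).subset, _, hl⟩,
    fun _ ⟨hI, _, hl⟩ => hl.subset_WFModel hI.1⟩

theorem total_wellfounded_char_general (P : Program atom) :
    Total (WFModel P) ↔
    ∃ (I : Interp atom) (l : atom → Ordinal.{0}),
      Model3 P I ∧ Total I ∧ CondWF P I l := by
  obtain ⟨⟨hmodel, l, hl⟩, hgreatest⟩ := isGreatest_WFModel P
  constructor
  · exact fun htotal => ⟨WFModel P, l, hmodel, htotal, hl⟩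
  · rintro ⟨I, l, hI, htotal, hl⟩
    exact htotal.mono (hgreatest ⟨hI, l, hl⟩)

/-- `P` has a total well-founded model iff there is a total model `I` and
a total level mapping `l` such that `P` satisfies (WF) w.r.t. `I` and `l`. -/
theorem total_wellfounded_char {atom : Type} [Countable atom] (P : Program atom) :
    Total (WFModel P) ↔
    ∃ (I : Interp atom) (l : atom → Ordinal.{0}),
      Model3 P I ∧ Total I ∧ CondWF P I l :=
  total_wellfounded_char_general P

end LP
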